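/- For every 1 ≤ p ≤ ∞ there exist a constant C_p and a nonnegative Schwartz function w on ℝ² with w ≥ 1 on B(0,1) (both independent of λ and f), such that for every N ∈ ℕ there is C_N with: for all λ ≥ 1 and all integrable f supported in (0,1), sup_{x ∈ B(0,1)} |T^λ f(x)| ≤ C_p (∫_{ℝ²} |T^λ f(y)|^p w(y) dy)^{1/p} + C_N λ^{−N} ‖f‖_{L¹}. -/

import Mathlib

open MeasureTheory Metric Set

noncomputable section

abbrev ℝ2 : Type := EuclideanSpace ℝ (Fin 2)

/-- The point `(a, b)` of the plane. -/
def pt (a b : ℝ) : ℝ2 := !₂[a, b]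

/-- The oscillatory integral operator `T^λ` with phase `φ^λ(x,ξ) = λ φ(x/λ, ξ)` and
amplitude `a^λ(x,ξ) = a(x/λ, ξ)`. -/
def Tlam (φ a : ℝ2 → ℝ → ℝ) (lam : ℝ) (f : ℝ → ℂ) (x : ℝ2) : ℂ :=
  ∫ ξ : ℝ, Complex.exp (Complex.I * ((lam * φ (lam⁻¹ • x) ξ : ℝ) : ℂ)) *
    ((a (lam⁻¹ • x) ξ : ℝ) : ℂ) * f ξ

/-- `φ` is a phase of reduced form with amplitude `a`, profile `h`, error `E`,
parameters `Npar` (order of controlled derivatives), `cpar` (smallness of `E`) and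
derivative bounds `Cab`. -/
structure IsReducedForm (Npar : ℕ) (cpar : ℝ) (Cab : ℕ → ℝ)
    (a φ : ℝ2 → ℝ → ℝ) (h : ℝ → ℝ) (E : ℝ2 → ℝ → ℝ) : Prop where
  a_smooth : ContDiff ℝ (⊤ : ℕ∞) fun p : ℝ2 × ℝ => a p.1 p.2
  φ_smooth : ContDiff ℝ (⊤ : ℕ∞) fun p : ℝ2 × ℝ => φ p.1 p.2
  h_smooth : ContDiff ℝ (⊤ : ℕ∞) h
  E_smooth : ContDiff ℝ (⊤ : ℕ∞) fun p : ℝ2 × ℝ => E p.1 p.2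
  a_supp : ∀ x ξ, a x ξ ≠ 0 → ‖x‖ < 1 ∧ ξ ∈ Set.Ioo (0 : ℝ) 1
  decomp : ∀ x ξ, a x ξ ≠ 0 → φ x ξ = x 0 * ξ + x 1 * h ξ + E x ξ
  h_zero : h 0 = 0
  h_deriv_zero : deriv h 0 = 0
  h_second : ∀ ξ : ℝ, 1 / 2 ≤ |iteratedDeriv 2 h ξ| ∧ |iteratedDeriv 2 h ξ| ≤ 2
  E_zero_right : ∀ x, E x 0 = 0
  E_deriv_zero_right : ∀ x, deriv (fun ξ => E x ξ) 0 = 0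
  E_zero_left : ∀ ξ, E 0 ξ = 0
  E_fderiv_zero_left : ∀ ξ, fderiv ℝ (fun x => E x ξ) 0 = 0
  φ_bound : ∀ n ≤ Npar, ∀ p : ℝ2 × ℝ, a p.1 p.2 ≠ 0 →
    ‖iteratedFDeriv ℝ n (fun q : ℝ2 × ℝ => φ q.1 q.2) p‖ ≤ Cab n
  E_bound : ∀ n ≤ Npar, ∀ p : ℝ2 × ℝ,
    ‖iteratedFDeriv ℝ n (fun q : ℝ2 × ℝ => E q.1 q.2) p‖ ≤ cpar

/-- `H` is an `s`-dimensional weight on the plane, with constant `A`. -/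
def IsWeight (s A : ℝ) (H : ℝ2 → ℝ) : Prop :=
  Measurable H ∧ (∀ x, H x ∈ Set.Icc (0 : ℝ) 1) ∧
    ∀ x₀ : ℝ2, ∀ R : ℝ, 1 ≤ R → (∫ x in Metric.ball x₀ R, H x) ≤ A * R ^ s

open scoped ENNReal

/-!
Freeze the parameter `ξ`. On the scale of the unit ball, the wave `exp (i λ φ(x/λ, ξ)) a(x/λ, ξ)` is
a plane wave of frequency `∇ₓφ(0, ξ) / 2π` times an amplitude whose derivatives of order `m` are
`O(λ^(-m/2) (1 + ‖x‖)^m)`. These frequencies stay in a fixed ball as `ξ` ranges over the compact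
support of the amplitude. If `η` is a Schwartz function whose Fourier transform is `1` on that
ball, then each modulation of `η` by such a frequency has integral one and vanishing moments, so
convolution with it reproduces Taylor polynomials, and convolution with `η` reproduces the wave up
to a Taylor remainder `O(λ^(-N))`, uniformly in `ξ`. Integrating in `ξ`, `T f` and `η * T f` differ
on the unit ball by `O(λ^(-N) ‖f‖₁)`. Finally `‖η(x - ·)‖` is dominated, uniformly over `‖x‖ < 1`,
by a single Schwartz weight `w`, and Hölder's inequality for the finite measure `w dx` passes from
the exponent `1` to every `p ≥ 1`.
-/

open scoped FourierTransform SchwartzMap Real Convolution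

section SchwartzMajorant

lemma comp_lsmul_convolution {G E F : Type*} [Sub G] [MeasurableSpace G] {μ : Measure G}
    [NormedAddCommGroup E] [NormedSpace ℝ E] [NormedAddCommGroup F] [NormedSpace ℝ F]
    (e : E ≃ₗᵢ[ℝ] F) (ρ : G → ℝ) (β : G → E) :
    e ∘ (ρ ⋆[.lsmul ℝ ℝ, μ] β) = ρ ⋆[.lsmul ℝ ℝ, μ] (e ∘ β) := by
  ext1 y
  exact (e.toContinuousLinearEquiv.integral_comp_comm _).symm.trans (by simp [convolution])

lemma exists_pow_mul_norm_convolution_le {G E F : Type*} [NormedAddCommGroup G]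
    [MeasurableSpace G] {μ : Measure G} [NormedAddCommGroup E] [NormedSpace ℝ E]
    [NormedAddCommGroup F] [NormedSpace ℝ F] (L : ℝ →L[ℝ] E →L[ℝ] F) {ρ : G → ℝ} {β : G → E}
    (hρ : ∀ k : ℕ, Integrable (fun t => ‖t‖ ^ k * ρ t) μ)
    (hβ : Continuous β) (hβc : HasCompactSupport β) (k : ℕ) :
    ∃ C, ∀ y, ‖y‖ ^ k * ‖(ρ ⋆[L, μ] β) y‖ ≤ C := by
  obtain ⟨B, hB⟩ := hβ.bounded_above_of_compact_support hβc
  obtain ⟨R, hR, hβR⟩ := hβc.isCompact.isBounded.exists_pos_norm_le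
  let D : G → ℝ := fun t =>
    ‖L‖ * B * 2 ^ (k - 1) * (‖‖t‖ ^ k * ρ t‖ + R ^ k * ‖‖t‖ ^ 0 * ρ t‖)
  have hD : Integrable D μ := ((hρ k).norm.add ((hρ 0).norm.const_mul _)).const_mul _
  have hkernel : ∀ y t, ‖y‖ ^ k * ‖L (ρ t) (β (y - t))‖ ≤ D t := by
    intro y t
    have hB0 : 0 ≤ B := (norm_nonneg _).trans (hB 0)
    by_cases hyt : β (y - t) = 0
    · simp only [hyt, map_zero, norm_zero, mul_zero]
      positivity
    · have hy : ‖y‖ ≤ ‖t‖ + R := by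
        linarith [norm_le_insert t y, norm_sub_rev t y, hβR _ (subset_tsupport β hyt)]
      calc ‖y‖ ^ k * ‖L (ρ t) (β (y - t))‖
          ≤ (2 ^ (k - 1) * (‖t‖ ^ k + R ^ k)) * (‖L‖ * ‖ρ t‖ * B) := by
            gcongr
            · exact (pow_le_pow_left₀ (norm_nonneg y) hy k).trans
                (add_pow_le (norm_nonneg t) hR.le k)
            · exact (L.le_opNorm₂ _ _).trans (by gcongr; exact hB _)
        _ = D t := by
            simp only [D, norm_mul, norm_pow, norm_norm, pow_zero, one_mul]
            ring
  refine ⟨∫ t, D t ∂μ, fun y => ?_⟩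
  calc ‖y‖ ^ k * ‖(ρ ⋆[L, μ] β) y‖ = ‖∫ t, ‖y‖ ^ k • L (ρ t) (β (y - t)) ∂μ‖ := by
        rw [integral_smul, norm_smul, norm_pow, norm_norm, convolution]
    _ ≤ ∫ t, D t ∂μ := norm_integral_le_of_norm_le hD <| .of_forall fun t => by
        simpa only [norm_smul, norm_pow, norm_norm] using hkernel y t

variable {V : Type*} [NormedAddCommGroup V] [NormedSpace ℝ V] [FiniteDimensional ℝ V]
  [MeasurableSpace V] [BorelSpace V] {μ : Measure V} [μ.IsAddHaarMeasure]

section Convolution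

variable {E : Type*} [NormedAddCommGroup E] [NormedSpace ℝ E] {ρ : V → ℝ} {β : V → E}

lemma fderiv_lsmul_convolution (hρ : LocallyIntegrable ρ μ) (hβ : ContDiff ℝ 1 β)
    (hβc : HasCompactSupport β) :
    fderiv ℝ (ρ ⋆[.lsmul ℝ ℝ, μ] β) = ρ ⋆[.lsmul ℝ ℝ, μ] fderiv ℝ β := by
  ext1 y
  refine (hβc.hasFDerivAt_convolution_right (.lsmul ℝ ℝ) hρ hβ y).fderiv.trans ?_
  refine integral_congr_ae <| .of_forall fun t => ?_
  ext v
  simp [ContinuousLinearMap.precompR_apply]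

lemma iteratedFDeriv_lsmul_convolution (hρ : LocallyIntegrable ρ μ)
    (hβ : ContDiff ℝ (⊤ : ℕ∞) β) (hβc : HasCompactSupport β) (n : ℕ) :
    iteratedFDeriv ℝ n (ρ ⋆[.lsmul ℝ ℝ, μ] β) = ρ ⋆[.lsmul ℝ ℝ, μ] iteratedFDeriv ℝ n β := by
  induction n with
  | zero => simp only [iteratedFDeriv_zero_eq_comp, comp_lsmul_convolution]
  | succ n ih =>
    rw [iteratedFDeriv_succ_eq_comp_left, iteratedFDeriv_succ_eq_comp_left, ih,
      fderiv_lsmul_convolution hρ (hβ.iteratedFDeriv_right (by norm_cast; exact le_top))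
        (hβc.iteratedFDeriv n)]
    exact comp_lsmul_convolution (E := V →L[ℝ] V [×n]→L[ℝ] E) (F := V [×(n + 1)]→L[ℝ] E)
      (continuousMultilinearCurryLeftEquiv ℝ (fun _ => V) E).symm ρ _

/-- The convolution of a rapidly decreasing function with a smooth compactly supported function, as
a Schwartz function. Only the second factor is differentiated. -/
def convolutionSchwartz (hρ : ∀ k : ℕ, Integrable (fun t => ‖t‖ ^ k * ρ t) μ)
    (hβ : ContDiff ℝ (⊤ : ℕ∞) β) (hβc : HasCompactSupport β) : 𝓢(V, E) where
  toFun := ρ ⋆[.lsmul ℝ ℝ, μ] β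
  smooth' := hβc.contDiff_convolution_right _ (by simpa using (hρ 0).locallyIntegrable) hβ
  decay' k n := by
    rw [iteratedFDeriv_lsmul_convolution (by simpa using (hρ 0).locallyIntegrable) hβ hβc]
    exact exists_pow_mul_norm_convolution_le _ hρ
      (hβ.continuous_iteratedFDeriv (by norm_cast; exact le_top)) (hβc.iteratedFDeriv n) k

end Convolution

omit [NormedSpace ℝ V] [FiniteDimensional ℝ V] in
lemma exists_measurable_rapidDecay_majorant {ι E : Type*} [NormedAddCommGroup E] {f : ι → V → E}
    (hf : ∀ k : ℕ, ∃ C, ∀ i y, (1 + ‖y‖) ^ k * ‖f i y‖ ≤ C) :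
    ∃ g : V → ℝ, Measurable g ∧ (∀ t, 0 ≤ g t) ∧
      (∀ k : ℕ, ∃ C, ∀ t, (1 + ‖t‖) ^ k * g t ≤ C) ∧ ∀ i y t, ‖y - t‖ ≤ 1 → ‖f i y‖ ≤ g t := by
  choose C hC using hf
  let c : ℕ → ℝ := fun k => 2 ^ k * max (C k) 0
  let g : V → ℝ := fun t => ⨅ k, c k / (1 + ‖t‖) ^ k
  have hc : ∀ k (t : V), 0 ≤ c k / (1 + ‖t‖) ^ k := fun k t => by positivity
  refine ⟨g, .iInf fun k => by fun_prop, fun t => Real.iInf_nonneg fun k => hc k t,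
    fun k => ⟨c k, fun t => ?_⟩, fun i y t hyt => le_ciInf fun k => ?_⟩
  · have hgt : g t ≤ c k / (1 + ‖t‖) ^ k :=
      ciInf_le ⟨0, Set.forall_mem_range.2 fun k => hc k t⟩ k
    rwa [le_div_iff₀' (by positivity)] at hgt
  · have hty : 1 + ‖t‖ ≤ 2 * (1 + ‖y‖) := by
      linarith [norm_le_insert y t, norm_nonneg y]
    rw [le_div_iff₀' (by positivity)]
    calc (1 + ‖t‖) ^ k * ‖f i y‖ ≤ (2 * (1 + ‖y‖)) ^ k * ‖f i y‖ := by gcongr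
      _ = 2 ^ k * ((1 + ‖y‖) ^ k * ‖f i y‖) := by rw [mul_pow, mul_assoc]
      _ ≤ c k := by
        refine mul_le_mul_of_nonneg_left ?_ (by positivity)
        exact (hC k i y).trans (le_max_left _ _)

lemma integrable_pow_mul_of_one_add_pow_mul_le {μ : Measure V} [μ.IsAddHaarMeasure] {g : V → ℝ}
    (hgm : Measurable g) (hg : ∀ t, 0 ≤ g t)
    (hdecay : ∀ k : ℕ, ∃ C, ∀ t, (1 + ‖t‖) ^ k * g t ≤ C) (k : ℕ) :
    Integrable (fun t => ‖t‖ ^ k * g t) μ := by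
  obtain ⟨C₁, hC₁⟩ := hdecay 0
  obtain ⟨C₂, hC₂⟩ := hdecay (k + μ.integrablePower)
  have hnorm : ∀ t, ‖g t‖ = g t := fun t => Real.norm_of_nonneg (hg t)
  simpa only [hnorm] using integrable_of_le_of_pow_mul_le (μ := μ) (f := g) (C₁ := C₁) (C₂ := C₂)
    (fun t => by simpa [hnorm] using hC₁ t)
    (fun t => by
      rw [hnorm]
      refine le_trans ?_ (hC₂ t)
      have := hg t
      gcongr
      linarith) hgm.aestronglyMeasurable

omit [MeasurableSpace V] [BorelSpace V] in
theorem exists_schwartzMap_norm_le {ι E : Type*} [NormedAddCommGroup E] {f : ι → V → E}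
    (hf : ∀ k : ℕ, ∃ C, ∀ i y, (1 + ‖y‖) ^ k * ‖f i y‖ ≤ C) :
    ∃ w : 𝓢(V, ℝ), (∀ y, 0 ≤ w y) ∧ ∀ i y, ‖f i y‖ ≤ w y := by
  borelize V
  let μ : Measure V := Measure.addHaar
  obtain ⟨g, hgm, hg, hdecay, hfg⟩ := exists_measurable_rapidDecay_majorant hf
  let b : ContDiffBump (0 : V) := ⟨1 / 2, 1, by norm_num, by norm_num⟩
  have hg_moments := integrable_pow_mul_of_one_add_pow_mul_le (μ := μ) hgm hg hdecay
  let w : 𝓢(V, ℝ) := convolutionSchwartz hg_moments (b.contDiff_normed (μ := μ))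
    b.hasCompactSupport_normed
  have hw : ∀ y, w y = ∫ t, g t * b.normed μ (y - t) ∂μ := fun y => rfl
  have hb : ∀ y t, 0 ≤ b.normed μ (y - t) := fun y t => b.nonneg_normed _
  refine ⟨w, fun y => hw y ▸ integral_nonneg fun t => mul_nonneg (hg t) (hb y t), fun i y => ?_⟩
  calc ‖f i y‖ = ∫ t, ‖f i y‖ * b.normed μ (y - t) ∂μ := by
        rw [integral_const_mul, integral_sub_left_eq_self, b.integral_normed, mul_one]
    _ ≤ ∫ t, g t * b.normed μ (y - t) ∂μ := by
        refine integral_mono ((b.integrable_normed.comp_sub_left y).const_mul _)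
          (b.hasCompactSupport_normed.convolutionExists_right (.lsmul ℝ ℝ)
            (by simpa using (hg_moments 0).locallyIntegrable) b.continuous_normed y) fun t => ?_
        by_cases hyt : y - t ∈ Function.support (b.normed μ)
        · rw [b.support_normed_eq, mem_ball_zero_iff] at hyt
          exact mul_le_mul_of_nonneg_right (hfg i y t hyt.le) (hb y t)
        · simp [Function.notMem_support.1 hyt]
    _ = w y := (hw y).symm

omit [MeasurableSpace V] [BorelSpace V] in
theorem exists_schwartzMap_majorant_comp_sub {E : Type*} [NormedAddCommGroup E] [NormedSpace ℝ E]
    (η : 𝓢(V, E)) {r : ℝ} (hr : 0 < r) :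
    ∃ w : 𝓢(V, ℝ), (∀ y, 0 ≤ w y) ∧ (∀ y ∈ ball 0 r, 1 ≤ w y) ∧
      ∀ x ∈ ball 0 r, ∀ y, ‖η (x - y)‖ ≤ w y := by
  have hdecay : ∀ k : ℕ, ∃ C, ∀ (x : ball (0 : V) r) y, (1 + ‖y‖) ^ k * ‖η (x - y)‖ ≤ C := by
    intro k
    refine ⟨(1 + r) ^ k * (2 ^ k * (Finset.Iic (k, 0)).sup
      (fun m => SchwartzMap.seminorm ℝ m.1 m.2) η), fun x y => ?_⟩
    have hx : ‖(x : V)‖ < r := mem_ball_zero_iff.1 x.2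
    have hy : 1 + ‖y‖ ≤ (1 + r) * (1 + ‖(x : V) - y‖) := by
      nlinarith [norm_le_insert' y x, norm_sub_rev y x, norm_nonneg ((x : V) - y)]
    calc (1 + ‖y‖) ^ k * ‖η (x - y)‖
        ≤ ((1 + r) * (1 + ‖(x : V) - y‖)) ^ k * ‖η (x - y)‖ := by gcongr
      _ = (1 + r) ^ k * ((1 + ‖(x : V) - y‖) ^ k * ‖η (x - y)‖) := by rw [mul_pow, mul_assoc]
      _ ≤ _ := by
        refine mul_le_mul_of_nonneg_left ?_ (by positivity)
        simpa using SchwartzMap.one_add_le_sup_seminorm_apply (𝕜 := ℝ) (m := (k, 0)) le_rfl le_rfl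
          η ((x : V) - y)
  obtain ⟨v, hv, hηv⟩ := exists_schwartzMap_norm_le hdecay
  let b : ContDiffBump (0 : V) := ⟨r, r + 1, hr, by linarith⟩
  refine ⟨v + b.hasCompactSupport.toSchwartzMap b.contDiff, fun y => add_nonneg (hv y) b.nonneg,
    fun y hy => ?_, fun x hx y => ?_⟩
  · exact (b.one_of_mem_closedBall (ball_subset_closedBall hy)).ge.trans
      (le_add_of_nonneg_left (hv y))
  · exact (hηv ⟨x, hx⟩ y).trans (le_add_of_nonneg_right b.nonneg)

end SchwartzMajorant

section VanishingMoments

variable {V : Type*} [NormedAddCommGroup V] [InnerProductSpace ℝ V] [FiniteDimensional ℝ V]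
  [MeasurableSpace V] [BorelSpace V]

theorem exists_schwartzMap_fourier_eventuallyEq_one {R : ℝ} (hR : 0 < R) :
    ∃ η : 𝓢(V, ℂ), ∀ ω ∈ ball (0 : V) R, 𝓕 (η : V → ℂ) =ᶠ[nhds ω] fun _ => 1 := by
  let b : ContDiffBump (0 : V) := ⟨R, R + 1, hR, by linarith⟩
  have hb_supp : HasCompactSupport fun x => (b x : ℂ) :=
    b.hasCompactSupport.comp_left Complex.ofReal_zero
  have hb_smooth : ContDiff ℝ (⊤ : ℕ∞) fun x => (b x : ℂ) :=
    Complex.ofRealCLM.contDiff.comp b.contDiff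
  refine ⟨𝓕⁻ (hb_supp.toSchwartzMap hb_smooth), fun ω hω => ?_⟩
  rw [← SchwartzMap.fourier_coe, FourierTransform.fourier_fourierInv_eq]
  filter_upwards [isOpen_ball.mem_nhds hω] with ζ hζ
  exact congrArg Complex.ofReal (b.one_of_mem_closedBall (ball_subset_closedBall hζ))

lemma integrable_prod_inner_smul {E : Type*} [NormedAddCommGroup E] [NormedSpace ℝ E] {f : V → E}
    (hfm : AEStronglyMeasurable f) {k : ℕ} (hf : Integrable fun y => ‖y‖ ^ k * ‖f y‖)
    (m : Fin k → V) : Integrable fun y => (∏ i, inner ℝ y (m i)) • f y := by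
  have hcont : Continuous fun y : V => ∏ i, inner ℝ y (m i) := by fun_prop
  refine (hf.const_mul (∏ i, ‖m i‖)).mono' (hcont.aestronglyMeasurable.smul hfm) <|
    .of_forall fun y => ?_
  have hprod : ∏ i, ‖inner ℝ y (m i)‖ ≤ ∏ i, ‖y‖ * ‖m i‖ :=
    Finset.prod_le_prod (fun _ _ => norm_nonneg _) fun i _ => norm_inner_le_norm y (m i)
  calc ‖(∏ i, inner ℝ y (m i)) • f y‖ ≤ (∏ i, ‖y‖ * ‖m i‖) * ‖f y‖ := by
        rw [norm_smul, norm_prod]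
        gcongr
    _ = (∏ i, ‖m i‖) * (‖y‖ ^ k * ‖f y‖) := by
        rw [Finset.prod_mul_distrib, Finset.prod_const, Finset.card_univ, Fintype.card_fin]
        ring

lemma integral_prod_inner_smul_eq_zero {E : Type*} [NormedAddCommGroup E] [NormedSpace ℂ E]
    {f : V → E} (hfm : AEStronglyMeasurable f)
    (hf : ∀ k : ℕ, Integrable fun y => ‖y‖ ^ k * ‖f y‖) {c : E}
    (hc : 𝓕 f =ᶠ[nhds 0] fun _ => c) {k : ℕ} (hk : k ≠ 0) (m : Fin k → V) :
    ∫ y, (∏ i, inner ℝ y (m i)) • f y = 0 := by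
  have hderiv : iteratedFDeriv ℝ k (𝓕 f) 0 m = 0 := by
    rw [(hc.iteratedFDeriv ℝ k).self_of_nhds, iteratedFDeriv_const_of_ne hk]
    rfl
  rw [Real.iteratedFDeriv_fourier (N := ⊤) (fun n _ => hf n) hfm le_top,
    Real.fourier_continuousMultilinearMap_apply
      (VectorFourier.integrable_fourierPowSMulRight _ (hf k) hfm), Real.fourier_eq'] at hderiv
  have hscaled : (-(2 * π * Complex.I)) ^ k • ∫ y, (∏ i, inner ℝ y (m i)) • f y = 0 := by
    rw [← integral_smul]
    simp only [inner_zero_right, mul_zero, Complex.ofReal_zero, zero_mul, Complex.exp_zero,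
      one_smul, VectorFourier.fourierPowSMulRight_apply] at hderiv
    exact hderiv
  exact (smul_eq_zero.1 hscaled).resolve_left (by simp [Real.pi_ne_zero])

omit [FiniteDimensional ℝ V] [MeasurableSpace V] [BorelSpace V] in
lemma map_diagonal_eq_sum_orthonormalBasis {ι F : Type*} [Fintype ι] [NormedAddCommGroup F]
    [NormedSpace ℝ F] (b : OrthonormalBasis ι ℝ V) {k : ℕ} (L : V [×k]→L[ℝ] F) (y : V) :
    L (fun _ => y) = ∑ r : Fin k → ι, (∏ i, inner ℝ y (b (r i))) • L (fun i => b (r i)) := by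
  conv_lhs => rw [← b.sum_repr' y]
  rw [L.map_sum (fun _ j => inner ℝ (b j) y • b j)]
  refine Finset.sum_congr rfl fun r _ => ?_
  rw [L.map_smul_univ (fun i => inner ℝ (b (r i)) y)]
  simp only [real_inner_comm]

theorem integral_mul_map_diagonal_eq_zero {f : V → ℂ} (hfm : AEStronglyMeasurable f)
    (hf : ∀ k : ℕ, Integrable fun y => ‖y‖ ^ k * ‖f y‖) {c : ℂ}
    (hc : 𝓕 f =ᶠ[nhds 0] fun _ => c) {k : ℕ} (hk : k ≠ 0) (L : V [×k]→L[ℝ] ℂ) :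
    ∫ y, f y * L (fun _ => y) = 0 := by
  let b := stdOrthonormalBasis ℝ V
  calc ∫ y, f y * L (fun _ => y)
      = ∫ y, ∑ r : Fin k → _, ((∏ i, inner ℝ y (b (r i))) • f y) * L (fun i => b (r i)) := by
        simp only [map_diagonal_eq_sum_orthonormalBasis b L, Finset.mul_sum, Complex.real_smul]
        congr! 3
        ring
    _ = ∑ r : Fin k → _, (∫ y, (∏ i, inner ℝ y (b (r i))) • f y) * L (fun i => b (r i)) := by
        rw [integral_finsetSum _ fun r _ => ?_]
        · simp only [integral_mul_const]
        · exact (integrable_prod_inner_smul hfm (hf k) _).mul_const _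
    _ = 0 := by simp only [integral_prod_inner_smul_eq_zero hfm hf hc hk, zero_mul,
        Finset.sum_const_zero]

end VanishingMoments

section Reproduction

/-- The Taylor polynomial of degree `n` of `f` at `x`, evaluated at the increment `y`. -/
def taylorPolynomial {E F : Type*} [NormedAddCommGroup E] [NormedSpace ℝ E]
    [NormedAddCommGroup F] [NormedSpace ℝ F] (f : E → F) (n : ℕ) (x y : E) : F :=
  ∑ k ∈ Finset.range (n + 1), (k.factorial : ℝ)⁻¹ • iteratedFDeriv ℝ k f x fun _ => y

lemma norm_sub_taylorPolynomial_le {E F : Type*} [NormedAddCommGroup E] [NormedSpace ℝ E]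
    [NormedAddCommGroup F] [NormedSpace ℝ F] [CompleteSpace F] {f : E → F} {n : ℕ}
    (hf : ContDiff ℝ (n + 1) f) {x y : E} {C : ℝ}
    (hC : ∀ t ∈ Icc (0 : ℝ) 1, ‖iteratedFDeriv ℝ (n + 1) f (x + t • y)‖ ≤ C) :
    ‖f (x + y) - taylorPolynomial f n x y‖ ≤ C * ‖y‖ ^ (n + 1) := by
  rw [map_add_eq_sum_add_integral_iteratedFDeriv fun t _ => hf.contDiffAt, taylorPolynomial,
    add_sub_cancel_left, norm_smul]
  have hremainder : ∀ t ∈ Ioc (0 : ℝ) 1,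
      ‖(1 - t) ^ n • iteratedFDeriv ℝ (n + 1) f (x + t • y) fun _ => y‖ ≤ C * ‖y‖ ^ (n + 1) := by
    rintro t ⟨ht0, ht1⟩
    have hpow : ‖(1 - t) ^ n‖ ≤ 1 := by
      rw [norm_pow, Real.norm_of_nonneg (by linarith)]
      exact pow_le_one₀ (by linarith) (by linarith)
    rw [norm_smul]
    refine (mul_le_of_le_one_left (norm_nonneg _) hpow).trans ?_
    refine ((iteratedFDeriv ℝ (n + 1) f (x + t • y)).le_opNorm _).trans ?_
    rw [Finset.prod_const, Finset.card_univ, Fintype.card_fin]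
    gcongr
    exact hC t ⟨ht0.le, ht1⟩
  have hintegral := intervalIntegral.norm_integral_le_of_norm_le_const (a := (0 : ℝ)) (b := 1)
    fun t ht => hremainder t (by rwa [uIoc_of_le zero_le_one] at ht)
  rw [sub_zero, abs_one, mul_one] at hintegral
  refine (mul_le_of_le_one_left (norm_nonneg _) ?_).trans hintegral
  rw [norm_inv, RCLike.norm_natCast]
  exact inv_le_one_of_one_le₀ (by exact_mod_cast n.factorial_pos)

lemma integrable_add_norm_pow_mul_norm {V E : Type*} [NormedAddCommGroup V] [MeasurableSpace V]
    [NormedAddCommGroup E] {μ : Measure V} {g : V → E}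
    (hg : ∀ k : ℕ, Integrable (fun y => ‖y‖ ^ k * ‖g y‖) μ) (c : ℝ) (m : ℕ) :
    Integrable (fun y => (c + ‖y‖) ^ m * ‖g y‖) μ := by
  simp only [add_pow, Finset.sum_mul]
  refine integrable_finsetSum _ fun j _ => ?_
  refine ((hg (m - j)).const_mul (c ^ j * (m.choose j))).congr <| .of_forall fun y => ?_
  simp only
  ring

/-- Kernels with finite moments, total mass one and vanishing moments of every positive order.
Convolution with such a kernel fixes every polynomial. -/
structure IsPolynomialReproducing {V : Type*} [NormedAddCommGroup V] [NormedSpace ℝ V]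
    [MeasurableSpace V] (g : V → ℂ) (μ : Measure V) : Prop where
  aestronglyMeasurable : AEStronglyMeasurable g μ
  integrable_pow_mul_norm : ∀ k : ℕ, Integrable (fun y => ‖y‖ ^ k * ‖g y‖) μ
  integral_eq_one : ∫ y, g y ∂μ = 1
  integral_mul_diagonal : ∀ k ≠ 0, ∀ L : V [×k]→L[ℝ] ℂ, ∫ y, g y * L (fun _ => y) ∂μ = 0

namespace IsPolynomialReproducing

variable {V : Type*} [NormedAddCommGroup V] [NormedSpace ℝ V] [MeasurableSpace V]
  {μ : Measure V} {g : V → ℂ}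

lemma integrable_mul_diagonal [BorelSpace V] (hg : IsPolynomialReproducing g μ) {k : ℕ}
    (L : V [×k]→L[ℝ] ℂ) : Integrable (fun y => g y * L (fun _ => y)) μ := by
  have hL : Continuous fun y => L (fun _ => y) := by fun_prop
  refine ((hg.integrable_pow_mul_norm k).const_mul ‖L‖).mono'
    (hg.aestronglyMeasurable.mul hL.aestronglyMeasurable) <| .of_forall fun y => ?_
  calc ‖g y * L (fun _ => y)‖ ≤ ‖g y‖ * (‖L‖ * ‖y‖ ^ k) := by
        rw [norm_mul]
        gcongr
        simpa using L.le_opNorm (fun _ => y)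
    _ = ‖L‖ * (‖y‖ ^ k * ‖g y‖) := by ring

lemma integrable_and_integral_mul_taylorPolynomial [BorelSpace V]
    (hg : IsPolynomialReproducing g μ) (A : V → ℂ) (n : ℕ) (x : V) :
    Integrable (fun y => g y * taylorPolynomial A n x (-y)) μ ∧
      ∫ y, g y * taylorPolynomial A n x (-y) ∂μ = A x := by
  let c : ℕ → ℂ := fun k => (k.factorial : ℂ)⁻¹ * (-1) ^ k
  have hexpand : ∀ y, g y * taylorPolynomial A n x (-y) =
      ∑ k ∈ Finset.range (n + 1), c k * (g y * iteratedFDeriv ℝ k A x fun _ => y) := by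
    intro y
    rw [taylorPolynomial, Finset.mul_sum]
    refine Finset.sum_congr rfl fun k _ => ?_
    have hneg := (iteratedFDeriv ℝ k A x).map_smul_univ (fun _ => (-1 : ℝ)) fun _ => y
    simp only [neg_one_smul, Finset.prod_const, Finset.card_univ, Fintype.card_fin] at hneg
    rw [hneg]
    simp only [c, Complex.real_smul]
    push_cast
    ring
  have hterm : ∀ k, Integrable (fun y => c k * (g y * iteratedFDeriv ℝ k A x fun _ => y)) μ :=
    fun k => (hg.integrable_mul_diagonal _).const_mul _
  simp only [hexpand]
  refine ⟨integrable_finsetSum _ fun k _ => hterm k, ?_⟩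
  rw [integral_finsetSum _ fun k _ => hterm k, Finset.sum_eq_single_of_mem 0 (by simp)]
  · simp [c, integral_mul_const, hg.integral_eq_one]
  · intro k _ hk
    rw [integral_const_mul, hg.integral_mul_diagonal k hk, mul_zero]

theorem norm_integral_mul_comp_sub_sub_le [BorelSpace V]
    (hg : IsPolynomialReproducing g μ) {A : V → ℂ} {n : ℕ} (hA : ContDiff ℝ (n + 1) A) {K : ℝ}
    (hK : ∀ z, ‖iteratedFDeriv ℝ (n + 1) A z‖ ≤ K * (1 + ‖z‖) ^ (n + 1)) (x : V) :
    ‖∫ y, g y * A (x - y) ∂μ - A x‖ ≤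
      K * ∫ y, (1 + ‖x‖ + ‖y‖) ^ (2 * (n + 1)) * ‖g y‖ ∂μ := by
  obtain ⟨hpoly_int, hpoly⟩ := hg.integrable_and_integral_mul_taylorPolynomial A n x
  have hK0 : 0 ≤ K := by simpa using (norm_nonneg _).trans (hK 0)
  let r : V → ℂ := fun y => g y * A (x - y) - g y * taylorPolynomial A n x (-y)
  have hr : ∀ y, ‖r y‖ ≤ K * ((1 + ‖x‖ + ‖y‖) ^ (2 * (n + 1)) * ‖g y‖) := by
    intro y
    have htaylor := norm_sub_taylorPolynomial_le hA (x := x) (y := -y)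
      (C := K * (1 + ‖x‖ + ‖y‖) ^ (n + 1)) fun t ht => (hK _).trans (by
        have hline : ‖x + t • -y‖ ≤ ‖x‖ + ‖y‖ := (norm_add_le _ _).trans <| by
          rw [norm_smul, norm_neg, Real.norm_of_nonneg ht.1]
          gcongr
          exact mul_le_of_le_one_left (norm_nonneg y) ht.2
        exact mul_le_mul_of_nonneg_left
          (pow_le_pow_left₀ (by positivity) (by linarith) _) hK0)
    rw [← sub_eq_add_neg, norm_neg] at htaylor
    calc ‖r y‖ ≤ ‖g y‖ * (K * (1 + ‖x‖ + ‖y‖) ^ (n + 1) * (1 + ‖x‖ + ‖y‖) ^ (n + 1)) := by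
          simp only [r, ← mul_sub, norm_mul]
          gcongr
          refine htaylor.trans ?_
          gcongr
          linarith [norm_nonneg x]
      _ = K * ((1 + ‖x‖ + ‖y‖) ^ (2 * (n + 1)) * ‖g y‖) := by ring
  have hbound := (integrable_add_norm_pow_mul_norm hg.integrable_pow_mul_norm (1 + ‖x‖)
    (2 * (n + 1))).const_mul K
  have hA_comp : Continuous fun y => A (x - y) := hA.continuous.comp (by fun_prop)
  have hr_int : Integrable r μ := hbound.mono'
    ((hg.aestronglyMeasurable.mul hA_comp.aestronglyMeasurable).sub hpoly_int.1) (.of_forall hr)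
  have hsplit : ∫ y, g y * A (x - y) ∂μ - A x = ∫ y, r y ∂μ := by
    rw [← hpoly, sub_eq_iff_eq_add, ← integral_add hr_int hpoly_int]
    simp only [r, sub_add_cancel]
  rw [hsplit, ← integral_const_mul]
  exact norm_integral_le_of_norm_le hbound (.of_forall hr)

end IsPolynomialReproducing

lemma fourier_modulation {V E : Type*} [NormedAddCommGroup V] [InnerProductSpace ℝ V]
    [FiniteDimensional ℝ V] [MeasurableSpace V] [BorelSpace V] [NormedAddCommGroup E]
    [NormedSpace ℂ E] (f : V → E) (ω ζ : V) :
    𝓕 (fun y => Complex.exp (((-2 * π * inner ℝ y ω : ℝ) : ℂ) * Complex.I) • f y) ζ =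
      𝓕 f (ζ + ω) := by
  simp only [Real.fourier_eq', smul_smul, ← Complex.exp_add]
  congr! 4
  rw [inner_add_right]
  push_cast
  ring

theorem isPolynomialReproducing_modulation {V : Type*} [NormedAddCommGroup V]
    [InnerProductSpace ℝ V] [FiniteDimensional ℝ V] [MeasurableSpace V] [BorelSpace V]
    (η : 𝓢(V, ℂ)) {ω : V} (hη : 𝓕 (η : V → ℂ) =ᶠ[nhds ω] fun _ => 1) :
    IsPolynomialReproducing
      (fun y => Complex.exp (((-2 * π * inner ℝ y ω : ℝ) : ℂ) * Complex.I) * η y) volume := by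
  let g : V → ℂ := fun y => Complex.exp (((-2 * π * inner ℝ y ω : ℝ) : ℂ) * Complex.I) * η y
  have hgm : AEStronglyMeasurable g :=
    Continuous.aestronglyMeasurable (by fun_prop)
  have hg : ∀ k : ℕ, Integrable fun y => ‖y‖ ^ k * ‖g y‖ := fun k => by
    simpa only [g, norm_mul, Complex.norm_exp_ofReal_mul_I, one_mul] using
      η.integrable_pow_mul volume k
  have hfourier : 𝓕 g =ᶠ[nhds 0] fun _ => 1 := by
    have hshift : Filter.Tendsto (fun ζ : V => ζ + ω) (nhds 0) (nhds ω) := by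
      simpa using (continuous_add_const ω).tendsto (0 : V)
    filter_upwards [hshift.eventually hη] with ζ hζ
    exact (fourier_modulation _ ω ζ).trans hζ
  have hmass : ∫ y, g y = 1 := by simpa [Real.fourier_eq'] using hfourier.self_of_nhds
  exact ⟨hgm, hg, hmass, fun k hk L => integral_mul_map_diagonal_eq_zero hgm hg hfourier hk L⟩

end Reproduction

section Amplitude

lemma norm_iteratedFDeriv_cexp_I_mul_le (n : ℕ) (s : ℝ) :
    ‖iteratedFDeriv ℝ n (fun t : ℝ => Complex.exp (Complex.I * t)) s‖ ≤ 1 := by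
  have hderiv : ∀ n : ℕ, iteratedDeriv n (fun t : ℝ => Complex.exp (Complex.I * t)) =
      fun t : ℝ => Complex.I ^ n * Complex.exp (Complex.I * t) := by
    intro n
    induction n with
    | zero => simp
    | succ n ih =>
      ext t
      have hlinear : HasDerivAt (fun t : ℝ => Complex.I * (t : ℂ)) Complex.I t := by
        simpa using (Complex.ofRealCLM.hasDerivAt (x := t)).const_mul Complex.I
      rw [iteratedDeriv_succ, ih, (hlinear.cexp.const_mul (Complex.I ^ n)).deriv]
      ring
  rw [norm_iteratedFDeriv_eq_norm_iteratedDeriv, hderiv n, norm_mul, norm_pow, Complex.norm_I,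
    one_pow, one_mul, mul_comm, Complex.norm_exp_ofReal_mul_I]

variable {V : Type*} [NormedAddCommGroup V] [NormedSpace ℝ V]

lemma norm_iteratedFDeriv_cexp_I_mul_mul_le {F : V → ℝ} {b : V → ℂ} {n : ℕ}
    (hF : ContDiff ℝ n F) (hb : ContDiff ℝ n b) {z : V} {B D : ℝ}
    (hFD : ∀ i, 1 ≤ i → i ≤ n → ‖iteratedFDeriv ℝ i F z‖ ≤ D ^ i)
    (hbD : ∀ i ≤ n, ‖iteratedFDeriv ℝ i b z‖ ≤ B * D ^ i) :
    ‖iteratedFDeriv ℝ n (fun z => Complex.exp (Complex.I * (F z : ℂ)) * b z) z‖ ≤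
      2 ^ n * n.factorial * B * D ^ n := by
  have hexp_smooth : ContDiff ℝ n (fun t : ℝ => Complex.exp (Complex.I * t)) :=
    (contDiff_const.mul Complex.ofRealCLM.contDiff).cexp
  have hD : ∀ i ≤ n, 0 ≤ D ^ i := fun i hi => by
    rcases i.eq_zero_or_pos with rfl | hi_pos
    · simp
    · exact (norm_nonneg _).trans (hFD i hi_pos hi)
  have hexp : ∀ i ≤ n, ‖iteratedFDeriv ℝ i (fun z => Complex.exp (Complex.I * (F z : ℂ))) z‖ ≤
      n.factorial * D ^ i := fun i hi => by
    have hcomp := norm_iteratedFDeriv_comp_le (C := 1) (D := D)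
      (hexp_smooth.of_le (by exact_mod_cast hi)) (hF.of_le (by exact_mod_cast hi)) le_rfl z
      (fun j _ => norm_iteratedFDeriv_cexp_I_mul_le j _) fun j h1 h2 => hFD j h1 (h2.trans hi)
    rw [mul_one] at hcomp
    exact hcomp.trans <| mul_le_mul_of_nonneg_right
      (by exact_mod_cast Nat.factorial_le hi) (hD i hi)
  refine (norm_iteratedFDeriv_mul_le (hexp_smooth.comp hF) hb z le_rfl).trans ?_
  calc _ ≤ ∑ i ∈ Finset.range (n + 1), (n.choose i : ℝ) * (n.factorial * B * D ^ n) := by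
        refine Finset.sum_le_sum fun i hi => ?_
        have hin : i ≤ n := Finset.mem_range_succ_iff.mp hi
        rw [mul_assoc, ← Nat.add_sub_of_le hin, pow_add, Nat.add_sub_of_le hin]
        refine mul_le_mul_of_nonneg_left ?_ (Nat.cast_nonneg _)
        calc _ ≤ (n.factorial * D ^ i) * (B * D ^ (n - i)) :=
              mul_le_mul (hexp i hin) (hbD _ (Nat.sub_le n i)) (norm_nonneg _)
                (mul_nonneg (Nat.cast_nonneg _) (hD i hin))
          _ = _ := by ring
    _ = 2 ^ n * n.factorial * B * D ^ n := by
        rw [← Finset.sum_mul, ← Nat.cast_sum, Nat.sum_range_choose]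
        push_cast
        ring

/-- The remainder of `Φ` in its first-order Taylor expansion at the origin. -/
def affineRemainder (Φ : V → ℝ) (u : V) : ℝ :=
  Φ u - (Φ 0 + fderiv ℝ Φ 0 u)

lemma contDiff_affineRemainder {Φ : V → ℝ} {n : WithTop ℕ∞} (hΦ : ContDiff ℝ n Φ) :
    ContDiff ℝ n (affineRemainder Φ) :=
  hΦ.sub (contDiff_const.add (fderiv ℝ Φ 0).contDiff)

lemma fderiv_affineRemainder {Φ : V → ℝ} (hΦ : Differentiable ℝ Φ) :
    fderiv ℝ (affineRemainder Φ) = fun u => fderiv ℝ Φ u - fderiv ℝ Φ 0 := by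
  ext1 u
  exact ((hΦ u).hasFDerivAt.sub ((fderiv ℝ Φ 0).hasFDerivAt.const_add _)).fderiv

lemma norm_iteratedFDeriv_affineRemainder {Φ : V → ℝ} {i : ℕ} (hΦ : ContDiff ℝ i Φ)
    (hi : 2 ≤ i) (u : V) :
    ‖iteratedFDeriv ℝ i (affineRemainder Φ) u‖ = ‖iteratedFDeriv ℝ i Φ u‖ := by
  obtain ⟨j, rfl⟩ := Nat.exists_eq_add_of_le' hi
  have hj : ContDiff ℝ (j + 1 : ℕ) (fderiv ℝ Φ) := hΦ.fderiv_right (by norm_cast)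
  rw [← norm_iteratedFDeriv_fderiv, fderiv_affineRemainder (hΦ.differentiable (by simp)),
    fun_iteratedFDeriv_sub_apply hj.contDiffAt contDiffAt_const,
    iteratedFDeriv_succ_const, Pi.zero_apply, sub_zero, norm_iteratedFDeriv_fderiv]

lemma norm_fderiv_affineRemainder_le {Φ : V → ℝ} (hΦ : ContDiff ℝ 2 Φ) {M : ℝ}
    (hM : ∀ u, ‖iteratedFDeriv ℝ 2 Φ u‖ ≤ M) (u : V) :
    ‖fderiv ℝ (affineRemainder Φ) u‖ ≤ M * ‖u‖ := by
  have hderiv : ContDiff ℝ 1 (fderiv ℝ Φ) := hΦ.fderiv_right (by norm_num)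
  have hmvt := convex_univ.norm_image_sub_le_of_norm_fderiv_le (𝕜 := ℝ) (x := 0) (y := u)
    (fun v _ => hderiv.differentiable one_ne_zero v)
    (fun v _ => by
      rw [← norm_iteratedFDeriv_one, norm_iteratedFDeriv_fderiv]
      exact hM v) (mem_univ _) (mem_univ _)
  rw [fderiv_affineRemainder (hΦ.differentiable two_ne_zero)]
  simpa using hmvt

lemma norm_iteratedFDeriv_rescaled {E : Type*} [NormedAddCommGroup E] [NormedSpace ℝ E]
    {f : V → E} {i : ℕ} (hf : ContDiff ℝ i f) {c : ℝ} (hc : 0 ≤ c) (z : V) :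
    ‖iteratedFDeriv ℝ i (fun z => f (c • z)) z‖ = c ^ i * ‖iteratedFDeriv ℝ i f (c • z)‖ := by
  rw [iteratedFDeriv_comp_const_smul _ hf, norm_smul, norm_pow, Real.norm_of_nonneg hc]

lemma norm_iteratedFDeriv_rescaled_affineRemainder {Φ : V → ℝ} {i : ℕ} (hΦ : ContDiff ℝ i Φ)
    {s : ℝ} (hs : 0 ≤ s) (z : V) :
    ‖iteratedFDeriv ℝ i (fun z => (s ^ 2)⁻¹ * affineRemainder Φ (s ^ 2 • z)) z‖ =
      (s ^ 2)⁻¹ * ((s ^ 2) ^ i * ‖iteratedFDeriv ℝ i (affineRemainder Φ) (s ^ 2 • z)‖) := by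
  have hrem := contDiff_affineRemainder hΦ
  have hrescaled : ContDiff ℝ i fun z => affineRemainder Φ (s ^ 2 • z) :=
    hrem.comp (contDiff_const_smul _)
  have hsmul := iteratedFDeriv_const_smul_apply' (a := (s ^ 2)⁻¹) (x := z) hrescaled.contDiffAt
  simp only [smul_eq_mul] at hsmul
  rw [hsmul, norm_smul, norm_iteratedFDeriv_rescaled hrem (by positivity), norm_inv, norm_pow,
    Real.norm_of_nonneg hs]

-- Order one gains a factor from the vanishing derivative at the origin; order `i ≥ 2` gains
-- `s ^ (2 * i - 2) ≤ s ^ i`.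
lemma norm_iteratedFDeriv_rescaled_affineRemainder_le {Φ : V → ℝ} {n : ℕ}
    (hΦ : ContDiff ℝ (n + 1) Φ) {M : ℝ} (hM1 : 1 ≤ M)
    (hM : ∀ i ≤ n + 1, ∀ u, ‖iteratedFDeriv ℝ i Φ u‖ ≤ M) {s : ℝ} (hs0 : 0 < s) (hs1 : s ≤ 1)
    {i : ℕ} (hi : 1 ≤ i) (hin : i ≤ n) (z : V) :
    ‖iteratedFDeriv ℝ i (fun z => (s ^ 2)⁻¹ * affineRemainder Φ (s ^ 2 • z)) z‖ ≤
      (M * s * (1 + ‖z‖)) ^ i := by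
  have hΦi : ContDiff ℝ i Φ := hΦ.of_le (by exact_mod_cast hin.trans n.le_succ)
  rw [norm_iteratedFDeriv_rescaled_affineRemainder hΦi hs0.le]
  rcases hi.eq_or_lt with rfl | hi2
  · have hfirst := norm_fderiv_affineRemainder_le (hΦ.of_le (by
      exact_mod_cast Nat.succ_le_succ hin)) (hM 2 (by omega)) (s ^ 2 • z)
    rw [norm_iteratedFDeriv_one]
    calc _ ≤ (s ^ 2)⁻¹ * ((s ^ 2) ^ 1 * (M * ‖s ^ 2 • z‖)) := by gcongr
      _ = M * s * (s * ‖z‖) := by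
        rw [norm_smul, norm_pow, Real.norm_of_nonneg hs0.le]
        field_simp
      _ ≤ (M * s * (1 + ‖z‖)) ^ 1 := by
        rw [pow_one]
        gcongr
        nlinarith [norm_nonneg z]
  · rw [norm_iteratedFDeriv_affineRemainder hΦi hi2]
    obtain ⟨j, rfl⟩ := Nat.exists_eq_add_of_le' hi2
    calc _ ≤ (s ^ 2)⁻¹ * ((s ^ 2) ^ (j + 2) * M) := by
          gcongr
          exact hM _ (by omega) _
      _ = M * s ^ (j + 2) * s ^ j := by
        field_simp
        ring
      _ ≤ M ^ (j + 2) * s ^ (j + 2) * 1 := by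
        gcongr ?_ * _ * ?_
        · exact le_self_pow₀ hM1 (by omega)
        · exact pow_le_one₀ hs0.le hs1
      _ ≤ (M * s * (1 + ‖z‖)) ^ (j + 2) := by
        rw [mul_one, ← mul_pow]
        exact pow_le_pow_left₀ (by positivity)
          (le_mul_of_one_le_right (by positivity) (by linarith [norm_nonneg z])) _

/-- The wave with phase `Φ` and amplitude `b` at wavelength `lam⁻¹`, dilated by `lam`; it is the
kernel of `T^λ` at a fixed `ξ`. -/
def scaledWave (Φ : V → ℝ) (b : V → ℂ) (lam : ℝ) (x : V) : ℂ :=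
  Complex.exp (Complex.I * ((lam * Φ (lam⁻¹ • x) : ℝ) : ℂ)) * b (lam⁻¹ • x)

lemma norm_scaledWave (Φ : V → ℝ) (b : V → ℂ) (lam : ℝ) (x : V) :
    ‖scaledWave Φ b lam x‖ = ‖b (lam⁻¹ • x)‖ := by
  rw [scaledWave, norm_mul, mul_comm Complex.I, Complex.norm_exp_ofReal_mul_I, one_mul]

/-- The factor of `scaledWave Φ b lam` that is left after the plane wave given by the affine part
of `Φ` at the origin is split off. -/
def slowAmplitude (Φ : V → ℝ) (b : V → ℂ) (lam : ℝ) (z : V) : ℂ :=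
  Complex.exp (Complex.I * ((lam * affineRemainder Φ (lam⁻¹ • z) : ℝ) : ℂ)) * b (lam⁻¹ • z)

lemma contDiff_slowAmplitude {Φ : V → ℝ} {b : V → ℂ} {n : WithTop ℕ∞} (hΦ : ContDiff ℝ n Φ)
    (hb : ContDiff ℝ n b) (lam : ℝ) : ContDiff ℝ n (slowAmplitude Φ b lam) := by
  have hphase : ContDiff ℝ n fun z => lam * affineRemainder Φ (lam⁻¹ • z) :=
    contDiff_const.mul ((contDiff_affineRemainder hΦ).comp (contDiff_const_smul _))
  exact (contDiff_const.mul (Complex.ofRealCLM.contDiff.comp hphase)).cexp.mul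
    (hb.comp (contDiff_const_smul _))

theorem norm_iteratedFDeriv_slowAmplitude_le {Φ : V → ℝ} {b : V → ℂ} {n : ℕ}
    (hΦ : ContDiff ℝ (n + 1) Φ) (hb : ContDiff ℝ n b) {M : ℝ} (hM1 : 1 ≤ M)
    (hΦM : ∀ i ≤ n + 1, ∀ u, ‖iteratedFDeriv ℝ i Φ u‖ ≤ M)
    (hbM : ∀ i ≤ n, ∀ u, ‖iteratedFDeriv ℝ i b u‖ ≤ M) {lam : ℝ} (hlam : 1 ≤ lam) (z : V) :
    ‖iteratedFDeriv ℝ n (slowAmplitude Φ b lam) z‖ ≤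
      2 ^ n * n.factorial * M * (M * (√lam)⁻¹ * (1 + ‖z‖)) ^ n := by
  obtain ⟨s, hs⟩ : ∃ s, s = (√lam)⁻¹ := ⟨_, rfl⟩
  have hs0 : 0 < s := by rw [hs]; positivity
  have hs1 : s ≤ 1 := hs ▸ inv_le_one_of_one_le₀ (Real.one_le_sqrt.mpr hlam)
  have hlam_inv : lam⁻¹ = s ^ 2 := by rw [hs, inv_pow, Real.sq_sqrt (by linarith)]
  have hphase : ContDiff ℝ n fun z => (s ^ 2)⁻¹ * affineRemainder Φ (s ^ 2 • z) :=
    contDiff_const.mul ((contDiff_affineRemainder (hΦ.of_le le_self_add)).comp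
      (contDiff_const_smul _))
  unfold slowAmplitude
  rw [← hs, hlam_inv, ← inv_inv lam, hlam_inv]
  refine norm_iteratedFDeriv_cexp_I_mul_mul_le hphase (hb.comp (contDiff_const_smul _))
    (fun i h1 hi => norm_iteratedFDeriv_rescaled_affineRemainder_le hΦ hM1 hΦM hs0 hs1 h1 hi z)
    fun i hi => ?_
  rw [Function.comp_def,
    norm_iteratedFDeriv_rescaled (hb.of_le (by exact_mod_cast hi)) (by positivity), mul_comm]
  gcongr
  · exact hbM i hi _
  · calc s ^ 2 ≤ 1 * s * 1 := by nlinarith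
      _ ≤ M * s * (1 + ‖z‖) := by
        gcongr
        linarith [norm_nonneg z]

lemma scaledWave_eq_mul_slowAmplitude (Φ : V → ℝ) (b : V → ℂ) {lam : ℝ} (hlam : lam ≠ 0) (x : V) :
    scaledWave Φ b lam x =
      Complex.exp (((lam * Φ 0 + fderiv ℝ Φ 0 x : ℝ) : ℂ) * Complex.I) *
        slowAmplitude Φ b lam x := by
  have hphase : lam * Φ (lam⁻¹ • x) =
      (lam * Φ 0 + fderiv ℝ Φ 0 x) + lam * affineRemainder Φ (lam⁻¹ • x) := by
    rw [affineRemainder, map_smul, smul_eq_mul]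
    field_simp
    ring
  rw [scaledWave, slowAmplitude, ← mul_assoc, ← Complex.exp_add, hphase]
  push_cast
  ring_nf

end Amplitude

section WaveReproduction

variable {V : Type*} [NormedAddCommGroup V] [InnerProductSpace ℝ V] [FiniteDimensional ℝ V]
  [MeasurableSpace V] [BorelSpace V]

/-- The frequency at the origin of the waves `scaledWave Φ b lam`, in the normalisation
`exp (2 π i ⟨x, ω⟩)` of the Fourier transform. -/
def originFrequency (Φ : V → ℝ) : V :=
  (2 * π)⁻¹ • gradient Φ 0

omit [MeasurableSpace V] [BorelSpace V] in
lemma two_pi_mul_inner_originFrequency (Φ : V → ℝ) (x : V) :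
    2 * π * inner ℝ x (originFrequency Φ) = fderiv ℝ Φ 0 x := by
  rw [originFrequency, inner_smul_right, real_inner_comm, gradient,
    InnerProductSpace.toDual_symm_apply]
  field_simp

omit [MeasurableSpace V] [BorelSpace V] in
lemma norm_originFrequency_le (Φ : V → ℝ) : ‖originFrequency Φ‖ ≤ ‖fderiv ℝ Φ 0‖ := by
  rw [originFrequency, gradient, norm_smul, LinearIsometryEquiv.norm_map, norm_inv,
    Real.norm_of_nonneg (by positivity)]
  exact mul_le_of_le_one_left (norm_nonneg _)
    (inv_le_one_of_one_le₀ (by nlinarith [Real.pi_gt_three]))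

lemma integral_mul_scaledWave_sub (η : V → ℂ) (Φ : V → ℝ) (b : V → ℂ) {lam : ℝ} (hlam : lam ≠ 0)
    (x : V) :
    ∫ y, η y * scaledWave Φ b lam (x - y) =
      Complex.exp (((lam * Φ 0 + fderiv ℝ Φ 0 x : ℝ) : ℂ) * Complex.I) *
        ∫ y, Complex.exp (((-2 * π * inner ℝ y (originFrequency Φ) : ℝ) : ℂ) * Complex.I) * η y *
          slowAmplitude Φ b lam (x - y) := by
  rw [← integral_const_mul]
  congr 1 with y
  have hsplit : Complex.exp (((lam * Φ 0 + fderiv ℝ Φ 0 (x - y) : ℝ) : ℂ) * Complex.I) =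
      Complex.exp (((lam * Φ 0 + fderiv ℝ Φ 0 x : ℝ) : ℂ) * Complex.I) *
        Complex.exp (((-2 * π * inner ℝ y (originFrequency Φ) : ℝ) : ℂ) * Complex.I) := by
    rw [neg_mul, neg_mul, two_pi_mul_inner_originFrequency, map_sub, ← Complex.exp_add]
    push_cast
    ring_nf
  rw [scaledWave_eq_mul_slowAmplitude Φ b hlam, hsplit]
  ring

theorem norm_integral_mul_scaledWave_sub_sub_le (η : 𝓢(V, ℂ)) {Φ : V → ℝ} {b : V → ℂ} {n : ℕ}
    (hη : 𝓕 (η : V → ℂ) =ᶠ[nhds (originFrequency Φ)] fun _ => 1)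
    (hΦ : ContDiff ℝ (n + 2) Φ) (hb : ContDiff ℝ (n + 1) b) {M : ℝ} (hM1 : 1 ≤ M)
    (hΦM : ∀ i ≤ n + 2, ∀ u, ‖iteratedFDeriv ℝ i Φ u‖ ≤ M)
    (hbM : ∀ i ≤ n + 1, ∀ u, ‖iteratedFDeriv ℝ i b u‖ ≤ M) {lam : ℝ} (hlam : 1 ≤ lam) (x : V) :
    ‖(∫ y, η y * scaledWave Φ b lam (x - y)) - scaledWave Φ b lam x‖ ≤
      2 ^ (n + 1) * (n + 1).factorial * M ^ (n + 2) * (√lam)⁻¹ ^ (n + 1) *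
        ∫ y, (1 + ‖x‖ + ‖y‖) ^ (2 * (n + 1)) * ‖η y‖ := by
  have hlam0 : lam ≠ 0 := by linarith
  have hK : ∀ z, ‖iteratedFDeriv ℝ (n + 1) (slowAmplitude Φ b lam) z‖ ≤
      2 ^ (n + 1) * (n + 1).factorial * M ^ (n + 2) * (√lam)⁻¹ ^ (n + 1) *
        (1 + ‖z‖) ^ (n + 1) := fun z => by
    refine (norm_iteratedFDeriv_slowAmplitude_le (by exact_mod_cast hΦ) (by exact_mod_cast hb)
      hM1 hΦM hbM hlam z).trans_eq ?_
    rw [mul_pow, mul_pow]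
    ring
  have hrepro := (isPolynomialReproducing_modulation η hη).norm_integral_mul_comp_sub_sub_le
    (contDiff_slowAmplitude (hΦ.of_le (by norm_cast; omega)) hb lam) hK x
  rw [integral_mul_scaledWave_sub _ _ _ hlam0, scaledWave_eq_mul_slowAmplitude _ _ hlam0,
    ← mul_sub, norm_mul, Complex.norm_exp_ofReal_mul_I, one_mul]
  simpa only [norm_mul, Complex.norm_exp_ofReal_mul_I, one_mul] using hrepro

end WaveReproduction

section UniformReproduction

lemma norm_iteratedFDeriv_slice_le {V W E : Type*} [NormedAddCommGroup V] [NormedSpace ℝ V]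
    [NormedAddCommGroup W] [NormedSpace ℝ W] [NormedAddCommGroup E] [NormedSpace ℝ E]
    {G : V × W → E} {n : ℕ} (hG : ContDiff ℝ n G) (x : V) (ξ : W) :
    ‖iteratedFDeriv ℝ n (fun x => G (x, ξ)) x‖ ≤ ‖iteratedFDeriv ℝ n G (x, ξ)‖ := by
  let inl : V →L[ℝ] V × W := ContinuousLinearMap.inl ℝ V W
  have hshift : ContDiff ℝ n fun p : V × W => G (p + (0, ξ)) :=
    hG.comp (contDiff_id.add contDiff_const)
  have hslice : (fun x => G (x, ξ)) = (fun p => G (p + (0, ξ))) ∘ inl := by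
    ext x
    simp [inl]
  rw [hslice, inl.iteratedFDeriv_comp_right hshift _ le_rfl, iteratedFDeriv_comp_add_right]
  refine (ContinuousMultilinearMap.norm_compContinuousLinearMap_le _ _).trans ?_
  simp only [inl, ContinuousLinearMap.inl_apply, Prod.mk_add_mk, add_zero, zero_add,
    Finset.prod_const, Finset.card_univ, Fintype.card_fin]
  exact mul_le_of_le_one_right (norm_nonneg _)
    (pow_le_one₀ (norm_nonneg _) (ContinuousLinearMap.norm_inl_le_one ℝ V W))

lemma exists_forall_norm_iteratedFDeriv_le {V E : Type*} [NormedAddCommGroup V] [NormedSpace ℝ V]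
    [NormedAddCommGroup E] [NormedSpace ℝ E] {G : V → E} {n : ℕ} (hG : ContDiff ℝ n G)
    (hGs : HasCompactSupport G) : ∃ M : ℝ, ∀ i ≤ n, ∀ u, ‖iteratedFDeriv ℝ i G u‖ ≤ M := by
  have hbound : ∀ i ≤ n, ∃ C, ∀ u, ‖iteratedFDeriv ℝ i G u‖ ≤ C := fun i hi =>
    (hGs.iteratedFDeriv (𝕜 := ℝ) i).exists_bound_of_continuous
      (hG.continuous_iteratedFDeriv (by exact_mod_cast hi))
  choose! C hC using hbound
  obtain ⟨M, hM⟩ := ((Finset.range (n + 1)).image C).bddAbove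
  exact ⟨M, fun i hi u => (hC i hi u).trans <|
    hM (Finset.mem_coe.mpr (Finset.mem_image_of_mem _ (Finset.mem_range_succ_iff.mpr hi)))⟩

lemma exists_forall_norm_iteratedFDeriv_slice_le {V W E : Type*} [NormedAddCommGroup V]
    [NormedSpace ℝ V] [NormedAddCommGroup W] [NormedSpace ℝ W] [NormedAddCommGroup E]
    [NormedSpace ℝ E] {G : V × W → E} {n : ℕ} (hG : ContDiff ℝ n G) (hGs : HasCompactSupport G) :
    ∃ M : ℝ, ∀ ξ, ∀ i ≤ n, ∀ u, ‖iteratedFDeriv ℝ i (fun x => G (x, ξ)) u‖ ≤ M := by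
  obtain ⟨M, hM⟩ := exists_forall_norm_iteratedFDeriv_le hG hGs
  exact ⟨M, fun ξ i hi u => (norm_iteratedFDeriv_slice_le
    (hG.of_le (by exact_mod_cast hi)) u ξ).trans (hM i hi _)⟩

lemma exists_contDiff_hasCompactSupport_eqOn {V E : Type*} [NormedAddCommGroup V] [NormedSpace ℝ V]
    [FiniteDimensional ℝ V] [NormedAddCommGroup E] [NormedSpace ℝ E] {n : ℕ∞} {f : V → E}
    (hf : ContDiff ℝ n f) {K : Set V} (hK : IsCompact K) :
    ∃ g : V → E, ContDiff ℝ n g ∧ HasCompactSupport g ∧ EqOn g f K := by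
  obtain ⟨r, hr, hKr⟩ := hK.isBounded.exists_pos_norm_le
  let χ : ContDiffBump (0 : V) := ⟨r, r + 1, hr, lt_add_one r⟩
  refine ⟨fun v => χ v • f v, χ.contDiff.smul hf, χ.hasCompactSupport.smul_right, fun v hv => ?_⟩
  simp only [χ.one_of_mem_closedBall (mem_closedBall_zero_iff.mpr (hKr v hv)), one_smul]

lemma inv_sqrt_pow_le_rpow_neg {lam : ℝ} (hlam : 1 ≤ lam) {N m : ℕ} (hm : 2 * N ≤ m) :
    (√lam)⁻¹ ^ m ≤ lam ^ (-(N : ℝ)) := by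
  calc (√lam)⁻¹ ^ m ≤ (√lam)⁻¹ ^ (2 * N) :=
        pow_le_pow_of_le_one (by positivity)
          (inv_le_one_of_one_le₀ (Real.one_le_sqrt.mpr hlam)) hm
    _ = lam ^ (-(N : ℝ)) := by
        rw [pow_mul, inv_pow, Real.sq_sqrt (by linarith), inv_pow, Real.rpow_neg (by linarith),
          Real.rpow_natCast]

variable {V W : Type*} [NormedAddCommGroup V] [InnerProductSpace ℝ V] [FiniteDimensional ℝ V]
  [MeasurableSpace V] [BorelSpace V] [NormedAddCommGroup W] [NormedSpace ℝ W]
  {φ : V → W → ℝ} {a : V → W → ℂ}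

omit [MeasurableSpace V] [BorelSpace V] in
lemma exists_originFrequency_mem_ball (hφ : ContDiff ℝ 1 (Function.uncurry φ))
    (hφs : HasCompactSupport (Function.uncurry φ)) :
    ∃ R > 0, ∀ ξ, originFrequency (φ · ξ) ∈ ball (0 : V) R := by
  obtain ⟨R, hR⟩ := exists_forall_norm_iteratedFDeriv_slice_le (n := 1) hφ hφs
  refine ⟨max R 0 + 1, by positivity, fun ξ => mem_ball_zero_iff.mpr ?_⟩
  have hgrad := hR ξ 1 le_rfl 0
  rw [norm_iteratedFDeriv_one] at hgrad
  exact (((norm_originFrequency_le _).trans hgrad).trans (le_max_left R 0)).trans_lt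
    (lt_add_one _)

lemma exists_norm_integral_mul_scaledWave_sub_sub_le (η : 𝓢(V, ℂ))
    (hη : ∀ ξ, 𝓕 (η : V → ℂ) =ᶠ[nhds (originFrequency (φ · ξ))] fun _ => 1)
    (hφ : ContDiff ℝ (⊤ : ℕ∞) (Function.uncurry φ)) (hφs : HasCompactSupport (Function.uncurry φ))
    (ha : ContDiff ℝ (⊤ : ℕ∞) (Function.uncurry a)) (has : HasCompactSupport (Function.uncurry a))
    (N : ℕ) :
    ∃ C > 0, ∀ lam : ℝ, 1 ≤ lam → ∀ x ∈ ball (0 : V) 1, ∀ ξ,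
      ‖(∫ y, η y * scaledWave (φ · ξ) (a · ξ) lam (x - y)) - scaledWave (φ · ξ) (a · ξ) lam x‖ ≤
        C * lam ^ (-(N : ℝ)) := by
  have hφ_nat : ∀ m : ℕ, ContDiff ℝ m (Function.uncurry φ) := contDiff_infty.mp hφ
  have ha_nat : ∀ m : ℕ, ContDiff ℝ m (Function.uncurry a) := contDiff_infty.mp ha
  have hslice : ∀ {m : ℕ} (ξ : W), ContDiff ℝ m fun x : V => (x, ξ) := fun ξ =>
    contDiff_id.prodMk contDiff_const
  let n := 2 * N
  obtain ⟨Mφ, hMφ⟩ := exists_forall_norm_iteratedFDeriv_slice_le (hφ_nat (n + 2)) hφs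
  obtain ⟨Ma, hMa⟩ := exists_forall_norm_iteratedFDeriv_slice_le (ha_nat (n + 1)) has
  let M := max 1 (max Mφ Ma)
  have hφM : ∀ ξ, ∀ i ≤ n + 2, ∀ u, ‖iteratedFDeriv ℝ i (φ · ξ) u‖ ≤ M := fun ξ i hi u =>
    (hMφ ξ i hi u).trans ((le_max_left _ _).trans (le_max_right _ _))
  have haM : ∀ ξ, ∀ i ≤ n + 1, ∀ u, ‖iteratedFDeriv ℝ i (a · ξ) u‖ ≤ M := fun ξ i hi u =>
    (hMa ξ i hi u).trans ((le_max_right _ _).trans (le_max_right _ _))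
  let C := 2 ^ (n + 1) * (n + 1).factorial * M ^ (n + 2)
  let J := ∫ y, (2 + ‖y‖) ^ (2 * (n + 1)) * ‖η y‖
  have hJ : 0 ≤ J := integral_nonneg fun y => by positivity
  refine ⟨C * (J + 1), mul_pos (by positivity) (add_pos_of_nonneg_of_pos hJ one_pos),
    fun lam hlam x hx ξ => ?_⟩
  have hmoment : ∫ y, (1 + ‖x‖ + ‖y‖) ^ (2 * (n + 1)) * ‖η y‖ ≤ J + 1 := by
    have hx1 : 1 + ‖x‖ ≤ 2 := by linarith [mem_ball_zero_iff.mp hx]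
    refine (integral_mono_of_nonneg (.of_forall fun y => by positivity)
      (integrable_add_norm_pow_mul_norm (η.integrable_pow_mul volume) 2 _)
      (.of_forall fun y => ?_)).trans (le_add_of_nonneg_right zero_le_one)
    simp only
    gcongr
  have hwave := norm_integral_mul_scaledWave_sub_sub_le η (hη ξ)
    ((hφ_nat (n + 2)).comp (hslice ξ)) ((ha_nat (n + 1)).comp (hslice ξ)) (le_max_left _ _)
    (hφM ξ) (haM ξ) hlam x
  calc _ ≤ C * (√lam)⁻¹ ^ (n + 1) * (J + 1) := hwave.trans (by gcongr)
    _ ≤ C * lam ^ (-(N : ℝ)) * (J + 1) := by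
      gcongr
      exact inv_sqrt_pow_le_rpow_neg hlam (Nat.le_succ _)
    _ = C * (J + 1) * lam ^ (-(N : ℝ)) := by ring

theorem exists_schwartzMap_norm_integral_mul_scaledWave_sub_sub_le [FiniteDimensional ℝ W]
    (hφ : ContDiff ℝ (⊤ : ℕ∞) (Function.uncurry φ))
    (ha : ContDiff ℝ (⊤ : ℕ∞) (Function.uncurry a)) (has : HasCompactSupport (Function.uncurry a)) :
    ∃ η : 𝓢(V, ℂ), ∀ N : ℕ, ∃ C > 0, ∀ lam : ℝ, 1 ≤ lam → ∀ x ∈ ball (0 : V) 1, ∀ ξ,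
      ‖(∫ y, η y * scaledWave (φ · ξ) (a · ξ) lam (x - y)) - scaledWave (φ · ξ) (a · ξ) lam x‖ ≤
        C * lam ^ (-(N : ℝ)) := by
  obtain ⟨ψ, hψ, hψs, hψφ⟩ := exists_contDiff_hasCompactSupport_eqOn hφ has.isCompact
  have hwave : ∀ lam x ξ, scaledWave (φ · ξ) (a · ξ) lam x =
      scaledWave (fun v => ψ (v, ξ)) (a · ξ) lam x := fun lam x ξ => by
    by_cases haξ : a (lam⁻¹ • x) ξ = 0
    · simp only [scaledWave, haξ, mul_zero]
    · have hφψ : ψ (lam⁻¹ • x, ξ) = φ (lam⁻¹ • x) ξ :=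
        hψφ (subset_tsupport _ (Function.mem_support.mpr haξ))
      simp only [scaledWave, hφψ]
  obtain ⟨R, hR, hfreq⟩ := exists_originFrequency_mem_ball (φ := fun v ξ => ψ (v, ξ))
    (hψ.of_le (by exact_mod_cast le_top)) hψs
  obtain ⟨η, hη⟩ := exists_schwartzMap_fourier_eventuallyEq_one (V := V) hR
  simp only [hwave]
  exact ⟨η, exists_norm_integral_mul_scaledWave_sub_sub_le (φ := fun v ξ => ψ (v, ξ)) η
    (fun ξ => hη _ (hfreq ξ)) hψ hψs ha has⟩

end UniformReproduction

section IntegralOperator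

variable {V W : Type*} [TopologicalSpace W] [MeasurableSpace W] [OpensMeasurableSpace W]
  {ν : Measure W} {k : V → W → ℂ} {B : ℝ} {f : W → ℂ}

lemma integrable_kernel_mul [TopologicalSpace V] (hk : Continuous (Function.uncurry k))
    (hkB : ∀ x ξ, ‖k x ξ‖ ≤ B) (hf : Integrable f ν) (x : V) :
    Integrable (fun ξ => k x ξ * f ξ) ν :=
  hf.bdd_mul (hk.uncurry_left x).aestronglyMeasurable (.of_forall (hkB x))

lemma continuous_integral_kernel_mul [TopologicalSpace V] [FirstCountableTopology V]
    (hk : Continuous (Function.uncurry k)) (hkB : ∀ x ξ, ‖k x ξ‖ ≤ B) (hf : Integrable f ν) :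
    Continuous fun x => ∫ ξ, k x ξ * f ξ ∂ν := by
  refine continuous_of_dominated (bound := fun ξ => B * ‖f ξ‖)
    (fun x => (integrable_kernel_mul hk hkB hf x).aestronglyMeasurable)
    (fun x => .of_forall fun ξ => ?_) (hf.norm.const_mul B)
    (.of_forall fun ξ => (hk.uncurry_right ξ).mul continuous_const)
  rw [norm_mul]
  exact mul_le_mul_of_nonneg_right (hkB x ξ) (norm_nonneg _)

variable [SecondCountableTopology W] [NormedAddCommGroup V] [MeasurableSpace V] [BorelSpace V]
  {μ : Measure V}

lemma integrable_prod_mul_kernel_mul [SFinite ν] [SFinite μ] (hk : Continuous (Function.uncurry k))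
    (hkB : ∀ x ξ, ‖k x ξ‖ ≤ B) (hf : Integrable f ν) {η : V → ℂ} (hη : Integrable η μ) (x : V) :
    Integrable (fun q : V × W => η q.1 * k (x - q.1) q.2 * f q.2) (μ.prod ν) := by
  have hshift : Continuous fun q : V × W => k (x - q.1) q.2 :=
    hk.comp ((continuous_const.sub continuous_fst).prodMk continuous_snd)
  refine ((hη.mul_prod hf).bdd_mul hshift.aestronglyMeasurable
    (.of_forall fun q => hkB _ _)).congr (.of_forall fun q => ?_)
  simp only
  ring

theorem norm_integral_mul_integral_kernel_sub_le [SFinite ν] [SFinite μ]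
    (hk : Continuous (Function.uncurry k)) (hkB : ∀ x ξ, ‖k x ξ‖ ≤ B) (hf : Integrable f ν)
    {η : V → ℂ} (hη : Integrable η μ) {x : V} {δ : ℝ}
    (hδ : ∀ ξ, ‖(∫ y, η y * k (x - y) ξ ∂μ) - k x ξ‖ ≤ δ) :
    ‖(∫ y, η y * ∫ ξ, k (x - y) ξ * f ξ ∂ν ∂μ) - ∫ ξ, k x ξ * f ξ ∂ν‖ ≤ δ * ∫ ξ, ‖f ξ‖ ∂ν := by
  have hprod := integrable_prod_mul_kernel_mul hk hkB hf hη x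
  have hfubini : ∫ y, η y * ∫ ξ, k (x - y) ξ * f ξ ∂ν ∂μ =
      ∫ ξ, (∫ y, η y * k (x - y) ξ ∂μ) * f ξ ∂ν := by
    simp only [← integral_const_mul, ← integral_mul_const, ← mul_assoc]
    exact integral_integral_swap hprod
  have hinner : Integrable (fun ξ => (∫ y, η y * k (x - y) ξ ∂μ) * f ξ) ν := by
    simpa only [integral_mul_const] using hprod.integral_prod_right
  rw [hfubini, ← integral_sub hinner (integrable_kernel_mul hk hkB hf x), ← integral_const_mul]
  refine norm_integral_le_of_norm_le (hf.norm.const_mul δ) (.of_forall fun ξ => ?_)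
  rw [← sub_mul, norm_mul]
  exact mul_le_mul_of_nonneg_right (hδ ξ) (norm_nonneg _)

lemma enorm_integral_mul_comp_sub_le_eLpNorm_one [μ.IsAddLeftInvariant] [μ.IsNegInvariant]
    {η F : V → ℂ} (hF : Measurable F) {w : V → ℝ} (hw : Measurable w) {x : V}
    (hηw : ∀ y, ‖η (x - y)‖ ≤ w y) :
    ‖∫ y, η y * F (x - y) ∂μ‖ₑ ≤
      eLpNorm F 1 (μ.withDensity fun y => ENNReal.ofReal (w y)) := by
  rw [eLpNorm_one_eq_lintegral_enorm,
    lintegral_withDensity_eq_lintegral_mul _ hw.ennreal_ofReal hF.enorm]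
  refine (enorm_integral_le_lintegral_enorm _).trans ?_
  rw [← lintegral_sub_left_eq_self _ x]
  refine lintegral_mono fun y => ?_
  simp only [sub_sub_cancel, enorm_mul, Pi.mul_apply]
  gcongr
  rw [← ofReal_norm]
  exact ENNReal.ofReal_le_ofReal (hηw y)

lemma exists_eLpNorm_one_le_mul_eLpNorm {α E : Type*} [MeasurableSpace α] [NormedAddCommGroup E]
    (μ : Measure α) [IsFiniteMeasure μ] {p : ℝ≥0∞} (hp : 1 ≤ p) :
    ∃ C : ℝ, 0 < C ∧ ∀ F : α → E, AEStronglyMeasurable F μ →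
      eLpNorm F 1 μ ≤ ENNReal.ofReal C * eLpNorm F p μ := by
  let c := μ univ ^ (1 / (1 : ℝ≥0∞).toReal - 1 / p.toReal)
  have hexp : 0 ≤ 1 / (1 : ℝ≥0∞).toReal - 1 / p.toReal := by
    rcases eq_or_ne p ∞ with rfl | hp_top
    · simp
    have hp_one : 1 ≤ p.toReal := by simpa using ENNReal.toReal_mono hp_top hp
    have : 1 / p.toReal ≤ 1 := div_le_one_of_le₀ hp_one (by positivity)
    simpa using this
  have hc : c ≠ ∞ := ENNReal.rpow_ne_top_of_nonneg hexp (measure_ne_top μ univ)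
  refine ⟨c.toReal + 1, by positivity, fun F hF => ?_⟩
  refine (eLpNorm_le_eLpNorm_mul_rpow_measure_univ hp hF).trans ?_
  rw [mul_comm]
  gcongr
  exact (ENNReal.le_ofReal_iff_toReal_le hc (by positivity)).mpr (by linarith)

end IntegralOperator

section OscillatoryIntegral

variable {V W : Type*} [NormedAddCommGroup V] [NormedSpace ℝ V] [MeasurableSpace W]

/-- The oscillatory integral operator `T^λ` for a complex amplitude and an arbitrary parameter
space. -/
def oscIntegral (ν : Measure W) (φ : V → W → ℝ) (a : V → W → ℂ) (lam : ℝ) (f : W → ℂ) (x : V) :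
    ℂ :=
  ∫ ξ, scaledWave (φ · ξ) (a · ξ) lam x * f ξ ∂ν

omit [MeasurableSpace W] in
lemma continuous_scaledWave [TopologicalSpace W] {φ : V → W → ℝ} {a : V → W → ℂ}
    (hφ : Continuous (Function.uncurry φ)) (ha : Continuous (Function.uncurry a)) (lam : ℝ) :
    Continuous (Function.uncurry fun x ξ => scaledWave (φ · ξ) (a · ξ) lam x) := by
  have hscale : Continuous fun q : V × W => (lam⁻¹ • q.1, q.2) := by fun_prop
  exact (Complex.continuous_exp.comp (continuous_const.mul (Complex.continuous_ofReal.comp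
    (continuous_const.mul (hφ.comp hscale))))).mul (ha.comp hscale)

end OscillatoryIntegral

theorem locally_constant_property_general {V W : Type*} [NormedAddCommGroup V]
    [InnerProductSpace ℝ V] [FiniteDimensional ℝ V] [MeasurableSpace V] [BorelSpace V]
    [NormedAddCommGroup W] [NormedSpace ℝ W] [FiniteDimensional ℝ W] [MeasurableSpace W]
    [BorelSpace W] (ν : Measure W) [SFinite ν] {φ : V → W → ℝ} {a : V → W → ℂ}
    (hφ : ContDiff ℝ (⊤ : ℕ∞) (Function.uncurry φ))
    (ha : ContDiff ℝ (⊤ : ℕ∞) (Function.uncurry a)) (has : HasCompactSupport (Function.uncurry a)) :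
    ∃ w : 𝓢(V, ℝ), (∀ y, 0 ≤ w y) ∧ (∀ y ∈ ball (0 : V) 1, 1 ≤ w y) ∧
      ∀ p : ℝ≥0∞, 1 ≤ p → ∃ Cp : ℝ, 0 < Cp ∧ ∀ N : ℕ, ∃ CN : ℝ, 0 < CN ∧
        ∀ lam : ℝ, 1 ≤ lam → ∀ f : W → ℂ, Integrable f ν → ∀ x ∈ ball (0 : V) 1,
          ENNReal.ofReal ‖oscIntegral ν φ a lam f x‖ ≤
            ENNReal.ofReal Cp * eLpNorm (oscIntegral ν φ a lam f) p
                (volume.withDensity fun y => ENNReal.ofReal (w y)) +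
              ENNReal.ofReal (CN * lam ^ (-(N : ℝ)) * ∫ ξ, ‖f ξ‖ ∂ν) := by
  obtain ⟨η, hη⟩ := exists_schwartzMap_norm_integral_mul_scaledWave_sub_sub_le hφ ha has
  obtain ⟨w, hw_nonneg, hw_one, hηw⟩ := exists_schwartzMap_majorant_comp_sub η one_pos
  obtain ⟨B, hB⟩ := has.exists_bound_of_continuous ha.continuous
  have hfinite : IsFiniteMeasure (volume.withDensity fun y => ENNReal.ofReal (w y)) :=
    isFiniteMeasure_withDensity_ofReal w.integrable.2
  refine ⟨w, hw_nonneg, hw_one, fun p hp => ?_⟩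
  obtain ⟨Cp, hCp, hHolder⟩ := exists_eLpNorm_one_le_mul_eLpNorm (E := ℂ)
    (volume.withDensity fun y => ENNReal.ofReal (w y)) hp
  refine ⟨Cp, hCp, fun N => ?_⟩
  obtain ⟨CN, hCN, herror⟩ := hη N
  refine ⟨CN, hCN, fun lam hlam f hf x hx => ?_⟩
  have hk := continuous_scaledWave hφ.continuous ha.continuous lam
  have hkB : ∀ x ξ, ‖scaledWave (φ · ξ) (a · ξ) lam x‖ ≤ B := fun x ξ =>
    (norm_scaledWave _ _ _ _).trans_le (hB (lam⁻¹ • x, ξ))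
  have hT : Continuous (oscIntegral ν φ a lam f) := continuous_integral_kernel_mul hk hkB hf
  have hrepro : ‖(∫ y, η y * oscIntegral ν φ a lam f (x - y)) - oscIntegral ν φ a lam f x‖ ≤
      CN * lam ^ (-(N : ℝ)) * ∫ ξ, ‖f ξ‖ ∂ν :=
    norm_integral_mul_integral_kernel_sub_le hk hkB hf η.integrable (herror lam hlam x hx)
  have hmain := (enorm_integral_mul_comp_sub_le_eLpNorm_one hT.measurable
    w.continuous.measurable (hηw x hx)).trans (hHolder _ hT.aestronglyMeasurable)
  rw [← ofReal_norm] at hmain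
  calc _ ≤ ENNReal.ofReal (‖∫ y, η y * oscIntegral ν φ a lam f (x - y)‖ +
          CN * lam ^ (-(N : ℝ)) * ∫ ξ, ‖f ξ‖ ∂ν) :=
        ENNReal.ofReal_le_ofReal ((norm_le_norm_add_norm_sub _ _).trans (by gcongr))
    _ ≤ _ := ENNReal.ofReal_add_le.trans (by gcongr)

lemma IsReducedForm.hasCompactSupport_amplitude {Npar : ℕ} {cpar : ℝ} {Cab : ℕ → ℝ}
    {a φ : ℝ2 → ℝ → ℝ} {h : ℝ → ℝ} {E : ℝ2 → ℝ → ℝ} (H : IsReducedForm Npar cpar Cab a φ h E) :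
    HasCompactSupport (Function.uncurry fun x ξ => (a x ξ : ℂ)) := by
  refine HasCompactSupport.intro (isCompact_closedBall (0 : ℝ2 × ℝ) 1) fun q hq => ?_
  by_contra hne
  obtain ⟨hx, hξ⟩ := H.a_supp q.1 q.2 fun ha => hne (by simp [Function.uncurry, ha])
  refine hq (mem_closedBall_zero_iff.mpr ?_)
  rw [Prod.norm_def, max_le_iff, Real.norm_of_nonneg hξ.1.le]
  exact ⟨hx.le, hξ.2.le⟩

/-- Lemma 2.6 of the paper, locally constant property: for every
`1 ≤ p ≤ ∞` there is a constant `C_p` and a nonnegative Schwartz weight `w ≥ 1` on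
`B(0,1)` such that, up to a rapidly decaying error,
`‖T^λ f‖_{L^∞(B(0,1))} ≲ ‖T^λ f‖_{L^p(w dx)}`. -/
theorem locally_constant_property :
    ∃ N₀ : ℕ, ∃ c₀ : ℝ, 0 < c₀ ∧
      ∀ Npar : ℕ, N₀ ≤ Npar → ∀ cpar : ℝ, 0 < cpar → cpar ≤ c₀ →
      ∀ (Cab : ℕ → ℝ) (a φ : ℝ2 → ℝ → ℝ) (h : ℝ → ℝ) (E : ℝ2 → ℝ → ℝ),
        IsReducedForm Npar cpar Cab a φ h E →
      ∀ p : ℝ≥0∞, 1 ≤ p →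
      ∃ Cp : ℝ, 0 < Cp ∧
      ∃ w : SchwartzMap ℝ2 ℝ, (∀ y, 0 ≤ w y) ∧ (∀ y ∈ Metric.ball (0 : ℝ2) 1, 1 ≤ w y) ∧
        ∀ N : ℕ, ∃ CN : ℝ, 0 < CN ∧
          ∀ lam : ℝ, 1 ≤ lam →
          ∀ f : ℝ → ℂ, Integrable f volume → Function.support f ⊆ Set.Ioo (0 : ℝ) 1 →
          ∀ x ∈ Metric.ball (0 : ℝ2) 1,
            ENNReal.ofReal ‖Tlam φ a lam f x‖ ≤
              ENNReal.ofReal Cp *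
                  eLpNorm (Tlam φ a lam f) p
                    (volume.withDensity fun y => ENNReal.ofReal (w y)) +
                ENNReal.ofReal (CN * lam ^ (-(N : ℝ)) * ∫ ξ : ℝ, ‖f ξ‖) := by
  refine ⟨0, 1, one_pos, fun Npar _ cpar _ _ Cab a φ h E H p hp => ?_⟩
  obtain ⟨w, hw_nonneg, hw_one, hw⟩ := locally_constant_property_general volume
    (a := fun x ξ => (a x ξ : ℂ)) H.φ_smooth
    (Complex.ofRealCLM.contDiff.comp H.a_smooth) H.hasCompactSupport_amplitude
  obtain ⟨Cp, hCp, hT⟩ := hw p hp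
  refine ⟨Cp, hCp, w, hw_nonneg, hw_one, fun N => ?_⟩
  obtain ⟨CN, hCN, hN⟩ := hT N
  exact ⟨CN, hCN, fun lam hlam f hf _ x hx => hN lam hlam f hf x hx⟩
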